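/- arXiv:2201.05534 — 2 statements merged into one kernel-verified Lean document; each statement's English description precedes it below -/
import Mathlib

section
/- For ε ∈ [0,1] and density operators ρ_AB, σ_AB with (1/2)‖ρ_AB - σ_AB‖₁ ≤ ε, the conditional min-entropies satisfy |H_min(A|B)_σ - H_min(A|B)_ρ| ≤ log(1 + ε d_A²). -/
open Matrix MeasureTheory
open scoped Kronecker ComplexOrder

noncomputable def mpow {n : Type*} [Fintype n] [DecidableEq n]
    (A : Matrix n n ℂ) (p : ℝ) : Matrix n n ℂ :=
  if hA : A.IsHermitian then
    (hA.eigenvectorUnitary : Matrix n n ℂ) *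
      Matrix.diagonal (fun i => ((hA.eigenvalues i ^ p : ℝ) : ℂ)) *
      (star (hA.eigenvectorUnitary : Matrix n n ℂ))
  else 0

noncomputable def traceNorm {n : Type*} [Fintype n] [DecidableEq n]
    (A : Matrix n n ℂ) : ℝ :=
  (mpow (Aᴴ * A) (1/2)).trace.re

def IsDensity {n : Type*} [Fintype n] [DecidableEq n] (ρ : Matrix n n ℂ) : Prop :=
  ρ.PosSemidef ∧ ρ.trace = 1

noncomputable def sandTr {a b : Type*} [Fintype a] [DecidableEq a] [Fintype b] [DecidableEq b]
    (α : ℝ) (ρ : Matrix (a × b) (a × b) ℂ) (η : Matrix b b ℂ) : ℝ :=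
  (mpow (((1 : Matrix a a ℂ) ⊗ₖ mpow η ((1 - α)/(2*α))) * ρ *
      ((1 : Matrix a a ℂ) ⊗ₖ mpow η ((1 - α)/(2*α)))) α).trace.re

noncomputable def Hcond {a b : Type*} [Fintype a] [DecidableEq a] [Fintype b] [DecidableEq b]
    (α : ℝ) (ρ : Matrix (a × b) (a × b) ℂ) : ℝ :=
  ⨆ η : {η : Matrix b b ℂ // IsDensity η}, (1/(1-α)) * Real.logb 2 (sandTr α ρ η)

/-- Conditional min-entropy:
`H_min(A|B)_ρ = sup {λ : ∃ density η_B, ρ_AB ≤ 2^{-λ} Id_A ⊗ η_B}`. -/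
noncomputable def Hmin {a b : Type*} [Fintype a] [DecidableEq a] [Fintype b] [DecidableEq b]
    (ρ : Matrix (a × b) (a × b) ℂ) : ℝ :=
  sSup {l : ℝ | ∃ η : Matrix b b ℂ, IsDensity η ∧
    (((2:ℝ) ^ (-l)) • ((1 : Matrix a a ℂ) ⊗ₖ η) - ρ).PosSemidef}


open scoped MatrixOrder Matrix.Norms.L2Operator in
theorem exists_pos_dom {n : Type*} [Fintype n] [DecidableEq n] (A : Matrix n n ℂ)
    (hA : A.IsHermitian) (htr : A.trace = 0) :
    ∃ Q : Matrix n n ℂ, Q.PosSemidef ∧ (Q - A).PosSemidef ∧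
      Q.trace.re = (1/2) * traceNorm A := by
  have hAA : (Aᴴ * A).PosSemidef := posSemidef_conjTranspose_mul_self A
  have hS : (mpow (Aᴴ * A) (1/2)) = CFC.abs A := by
    unfold CFC.abs
    symm
    have hpos : (mpow (Aᴴ * A) (1/2)).PosSemidef := by
      rw [mpow, dif_pos hAA.1]
      have hd : (Matrix.diagonal (fun i => ((hAA.1.eigenvalues i ^ (1/2:ℝ) : ℝ) : ℂ))).PosSemidef := by
        rw [Matrix.posSemidef_diagonal_iff]
        intro i
        exact_mod_cast Real.rpow_nonneg (hAA.eigenvalues_nonneg i) _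
      exact hd.mul_mul_conjTranspose_same _
    refine CFC.sqrt_unique ?_ (Matrix.nonneg_iff_posSemidef.2 hpos)
    rw [mpow, dif_pos hAA.1]
    conv_rhs => rw [star_eq_conjTranspose, hAA.1.spectral_theorem]
    set U := hAA.1.eigenvectorUnitary with hU
    have hUU : star (U : Matrix n n ℂ) * (U : Matrix n n ℂ) = 1 := Unitary.coe_star_mul_self U
    have : ∀ D : Matrix n n ℂ, (U : Matrix n n ℂ) * D * star (U : Matrix n n ℂ) * ((U : Matrix n n ℂ) * D * star (U : Matrix n n ℂ)) = (U : Matrix n n ℂ) * (D * D) * star (U : Matrix n n ℂ) := by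
      intro D
      calc _ = (U : Matrix n n ℂ) * D * (star (U : Matrix n n ℂ) * (U : Matrix n n ℂ)) * D * star (U : Matrix n n ℂ) := by simp only [Matrix.mul_assoc]
        _ = _ := by rw [hUU]; simp only [Matrix.mul_assoc, Matrix.one_mul, Matrix.mul_one]
    rw [this, Matrix.diagonal_mul_diagonal, Unitary.conjStarAlgAut_apply]
    congr 3
    funext i
    have := hAA.eigenvalues_nonneg i
    simp only [Function.comp]
    rw [← Complex.ofReal_mul, ← Real.sqrt_eq_rpow, Real.mul_self_sqrt this]
    rfl
  have hsa : IsSelfAdjoint A := hA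
  refine ⟨A⁺, Matrix.nonneg_iff_posSemidef.1 (CFC.posPart_nonneg A), ?_, ?_⟩
  · have h := CFC.posPart_sub_negPart A hsa
    have : A⁺ - A = A⁻ := by rw [sub_eq_iff_eq_add, add_comm]; exact sub_eq_iff_eq_add.1 h
    rw [this]
    exact Matrix.nonneg_iff_posSemidef.1 (CFC.negPart_nonneg A)
  · have h := CFC.abs_add_self A hsa
    rw [two_smul] at h
    have h2 := congrArg (fun X => (Matrix.trace X).re) h
    simp [htr] at h2
    rw [traceNorm, hS, h2]
    ring

def ptr {a b : Type*} [Fintype a] (Q : Matrix (a × b) (a × b) ℂ) : Matrix b b ℂ :=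
  ∑ j, Q.submatrix (fun x => (j, x)) (fun x => (j, x))

theorem ptr_psd {a b : Type*} [Fintype a] [DecidableEq a] [Fintype b] [DecidableEq b]
    (Q : Matrix (a × b) (a × b) ℂ) (hQ : Q.PosSemidef) : (ptr Q).PosSemidef :=
  Matrix.posSemidef_sum _ fun j _ => hQ.submatrix _

theorem ptr_trace {a b : Type*} [Fintype a] [DecidableEq a] [Fintype b] [DecidableEq b]
    (Q : Matrix (a × b) (a × b) ℂ) : (ptr Q).trace = Q.trace := by
  simp [ptr, Matrix.trace, Fintype.sum_prod_type, Matrix.sum_apply]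
  rw [Finset.sum_comm]

theorem le_ptr {a b : Type*} [Fintype a] [DecidableEq a] [Fintype b] [DecidableEq b]
    (Q : Matrix (a × b) (a × b) ℂ) (hQ : Q.PosSemidef) :
    ((Fintype.card a : ℝ) • ((1 : Matrix a a ℂ) ⊗ₖ ptr Q) - Q).PosSemidef := by
  let D : a → a → Matrix (a × b) (a × b) ℂ := fun i j =>
    Matrix.diagonal fun x => (if i = x.1 then 1 else 0) - (if j = x.1 then 1 else 0)
  have h1 : ((1/2 : ℝ) • ∑ i, ∑ j, D i j * Q * (D i j)ᴴ).PosSemidef :=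
    (Matrix.posSemidef_sum _ fun i _ => Matrix.posSemidef_sum _ fun j _ =>
      hQ.mul_mul_conjTranspose_same _).smul (by norm_num)
  have h2 : ((Fintype.card a : ℝ) • ∑ j, (Matrix.diagonal (fun i : a => if i = j then (0:ℂ) else 1)) ⊗ₖ
      Q.submatrix (fun x : b => (j, x)) (fun x => (j, x))).PosSemidef := by
    refine (Matrix.posSemidef_sum _ fun j _ => Matrix.PosSemidef.kronecker ?_ (hQ.submatrix _)).smul (by positivity)
    rw [Matrix.posSemidef_diagonal_iff]
    intro i
    split_ifs <;> simp
  have := h1.add h2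
  convert this using 1
  ext ⟨k, x⟩ ⟨l, y⟩
  have e1 : (∑ i, ∑ j, D i j * Q * (D i j)ᴴ) (k,x) (l,y) =
      (2 * (Fintype.card a : ℂ) * (if k = l then 1 else 0) - 2) * Q (k,x) (l,y) := by
    simp only [D, Matrix.sum_apply, Matrix.diagonal_conjTranspose, Matrix.mul_diagonal, Matrix.diagonal_mul]
    simp only [mul_right_comm _ (Q _ _), ← Finset.sum_mul]
    congr 1
    have hs : ∀ i j l : a, star ((if i = l then (1:ℂ) else 0) - (if j = l then 1 else 0)) =
        (if i = l then (1:ℂ) else 0) - (if j = l then 1 else 0) := by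
      intro i j l
      split_ifs <;> simp
    simp only [Pi.star_apply, hs, sub_mul, mul_sub, Finset.sum_sub_distrib]
    by_cases h : k = l
    · subst h; simp; ring
    · simp [h, Ne.symm h]; try ring
  have e2 : (∑ j, (Matrix.diagonal (fun i : a => if i = j then (0:ℂ) else 1)) ⊗ₖ
      Q.submatrix (fun x : b => (j, x)) (fun x => (j, x))) (k,x) (l,y) =
      if k = l then (ptr Q x y - Q (k,x) (l,y)) else 0 := by
    simp only [Matrix.sum_apply, Matrix.kroneckerMap_apply, Matrix.diagonal_apply, ptr, Matrix.submatrix_apply]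
    by_cases h : k = l
    · subst h
      have : ∀ j, (if k = k then (if k = j then (0:ℂ) else 1) else 0) * Q (j, x) (j, y) =
          Q (j, x) (j, y) - (if k = j then Q (j, x) (j, y) else 0) := by
        intro j
        by_cases hj : k = j <;> simp [hj]
      rw [Finset.sum_congr rfl fun j _ => this j, Finset.sum_sub_distrib]
      simp
    · simp [h]
  rw [Matrix.add_apply, Matrix.smul_apply, Matrix.smul_apply, e1, e2, Matrix.sub_apply, Matrix.smul_apply, Matrix.kroneckerMap_apply, Matrix.one_apply]
  simp only [Complex.real_smul]
  push_cast
  split_ifs <;> ring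

def HSet {a b : Type*} [Fintype a] [DecidableEq a] [Fintype b] [DecidableEq b]
    (ρ : Matrix (a × b) (a × b) ℂ) : Set ℝ :=
  {l : ℝ | ∃ η : Matrix b b ℂ, IsDensity η ∧
    (((2:ℝ) ^ (-l)) • ((1 : Matrix a a ℂ) ⊗ₖ η) - ρ).PosSemidef}

theorem HSet_bound {a b : Type*} [Fintype a] [DecidableEq a] [Fintype b] [DecidableEq b]
    (ρ : Matrix (a × b) (a × b) ℂ) (hρ : IsDensity ρ) (l : ℝ) (hl : l ∈ HSet ρ) :
    1 ≤ (2:ℝ) ^ (-l) * Fintype.card a := by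
  obtain ⟨η, hη, h⟩ := hl
  have := h.trace_nonneg
  rw [Matrix.trace_sub, Matrix.trace_smul, Matrix.trace_kronecker, hη.2, hρ.2, Matrix.trace_one] at this
  have := (Complex.le_def.1 this).1
  simp only [Complex.real_smul, Complex.sub_re, Complex.re_ofReal_mul] at this
  simp at this
  exact this

/-- Building an element of the feasible set from an unnormalised operator. -/
theorem HSet_mem {a b : Type*} [Fintype a] [DecidableEq a] [Fintype b] [DecidableEq b]
    (ρ : Matrix (a × b) (a × b) ℂ) (W : Matrix b b ℂ) (t : ℝ) (ht : 0 < t)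
    (hW : W.PosSemidef) (hWt : W.trace = t)
    (h : ((1 : Matrix a a ℂ) ⊗ₖ W - ρ).PosSemidef) : -Real.logb 2 t ∈ HSet ρ := by
  refine ⟨(t⁻¹ : ℝ) • W, ⟨hW.smul (by positivity), ?_⟩, ?_⟩
  · rw [Matrix.trace_smul, hWt, Complex.real_smul, ← Complex.ofReal_mul, inv_mul_cancel₀ ht.ne']
    simp
  · rw [neg_neg, Real.rpow_logb (by norm_num) (by norm_num) ht, Matrix.kronecker_smul, smul_smul,
      mul_inv_cancel₀ ht.ne', one_smul]
    exact h

theorem Hmin_one_side {dA dB : ℕ} (ε : ℝ) (hε : ε ∈ Set.Icc (0:ℝ) 1)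
    (ρ σ : Matrix (Fin dA × Fin dB) (Fin dA × Fin dB) ℂ)
    (hρ : IsDensity ρ) (hσ : IsDensity σ)
    (Q : Matrix (Fin dA × Fin dB) (Fin dA × Fin dB) ℂ) (hQ : Q.PosSemidef)
    (hQs : (Q - (σ - ρ)).PosSemidef) (hQt : Q.trace.re ≤ ε) :
    Hmin ρ - Hmin σ ≤ Real.logb 2 (1 + ε * (dA : ℝ)^2) := by
  have hdA : 0 < (dA : ℝ) := by
    rcases Nat.eq_zero_or_pos dA with h | h
    · subst h
      have := hρ.2
      simp [Matrix.trace] at this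
    · exact_mod_cast h
  have hbdd : BddAbove (HSet σ) := by
    refine ⟨Real.logb 2 dA, fun l hl => ?_⟩
    have := HSet_bound σ hσ l hl
    rw [Real.rpow_neg (by norm_num), Fintype.card_fin, inv_mul_eq_div, one_le_div (by positivity)] at this
    rwa [Real.le_logb_iff_rpow_le (by norm_num) hdA]
  have hne : (HSet ρ).Nonempty := by
    refine ⟨_, HSet_mem ρ ((dA : ℝ) • ptr ρ) dA hdA ((ptr_psd ρ hρ.1).smul hdA.le) ?_ ?_⟩
    · rw [Matrix.trace_smul, ptr_trace, hρ.2]; simp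
    · have := le_ptr ρ hρ.1
      rwa [Fintype.card_fin, ← Matrix.kronecker_smul] at this
  rw [sub_le_iff_le_add]
  refine csSup_le hne fun l hl => ?_
  have hb := HSet_bound ρ hρ l hl
  rw [Fintype.card_fin] at hb
  obtain ⟨η, hη, h⟩ := hl
  set c : ℝ := (2:ℝ) ^ (-l) with hc
  have hc0 : 0 < c := by positivity
  have hq0 : 0 ≤ Q.trace.re := (Complex.le_def.1 hQ.trace_nonneg).1
  have hqi : Q.trace = (Q.trace.re : ℂ) := by
    apply Complex.ext
    · simp
    · simpa using (Complex.le_def.1 hQ.trace_nonneg).2.symm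
  set q := Q.trace.re
  have hmem : -Real.logb 2 (c + dA * q) ∈ HSet σ := by
    refine HSet_mem σ (c • η + (dA : ℝ) • ptr Q) _ (by positivity)
      ((hη.1.smul hc0.le).add ((ptr_psd Q hQ).smul hdA.le)) ?_ ?_
    · rw [Matrix.trace_add, Matrix.trace_smul, Matrix.trace_smul, hη.2, ptr_trace, hqi]
      simp
    · have := (h.add (le_ptr Q hQ)).add hQs
      rw [Fintype.card_fin] at this
      rw [Matrix.kronecker_add, Matrix.kronecker_smul, Matrix.kronecker_smul]
      convert this using 1
      abel
  have hle : -Real.logb 2 (c + dA * q) ≤ Hmin σ := le_csSup hbdd hmem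
  have hε0 := hε.1
  have hlog : Real.logb 2 (c + dA * q) ≤ Real.logb 2 (c * (1 + ε * (dA:ℝ)^2)) := by
    apply Real.logb_le_logb_of_le (by norm_num) (by positivity)
    have h1 : dA * q ≤ dA * ε := by gcongr
    have h2 : dA * ε * 1 ≤ dA * ε * (c * dA) := by gcongr
    nlinarith
  rw [Real.logb_mul hc0.ne' (by positivity), hc, Real.logb_rpow (by norm_num) (by norm_num)] at hlog
  rw [← hc] at hlog
  linarith

theorem traceNorm_comm {n : Type*} [Fintype n] [DecidableEq n] (A B : Matrix n n ℂ) :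
    traceNorm (A - B) = traceNorm (B - A) := by
  unfold traceNorm
  rw [← neg_sub B A, Matrix.conjTranspose_neg, neg_mul_neg]

/-- Uniform continuity bound for the conditional min-entropy. -/
theorem Hmin_uniform_continuity {dA dB : ℕ} (ε : ℝ) (hε : ε ∈ Set.Icc (0:ℝ) 1)
    (ρ σ : Matrix (Fin dA × Fin dB) (Fin dA × Fin dB) ℂ)
    (hρ : IsDensity ρ) (hσ : IsDensity σ)
    (hdist : (1/2) * traceNorm (ρ - σ) ≤ ε) :
    |Hmin σ - Hmin ρ| ≤ Real.logb 2 (1 + ε * (dA : ℝ)^2) := by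
  rw [abs_sub_le_iff]
  constructor
  · obtain ⟨Q, h1, h2, h3⟩ := exists_pos_dom (ρ - σ) (hρ.1.1.sub hσ.1.1)
      (by rw [Matrix.trace_sub, hρ.2, hσ.2, sub_self])
    exact Hmin_one_side ε hε σ ρ hσ hρ Q h1 h2 (h3 ▸ hdist)
  · rw [traceNorm_comm] at hdist
    obtain ⟨Q, h1, h2, h3⟩ := exists_pos_dom (σ - ρ) (hσ.1.1.sub hρ.1.1)
      (by rw [Matrix.trace_sub, hρ.2, hσ.2, sub_self])
    exact Hmin_one_side ε hε ρ σ hρ hσ Q h1 h2 (h3 ▸ hdist)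
end

section
/- Let α ∈ [1/2,1) and let σ_AB, P_AB be density operators, ε > 0, and μ_B, ν_B density operators. Define θ_B := (1/(1+ε)) μ_B + (ε/(1+ε)) ν_B. Then tr((θ_B^{-α'/2}(σ_AB + ε P_AB)θ_B^{-α'/2})^α) ≥ (1+ε)^{α-1} [tr((μ_B^{-α'/2} σ_AB μ_B^{-α'/2})^α) + ε · tr((ν_B^{-α'/2} P_AB ν_B^{-α'/2})^α)]. -/
open Matrix MeasureTheory
open scoped Kronecker ComplexOrder

section helpers
variable {n : Type*} [Fintype n] [DecidableEq n]

lemma mpow_eq_cfc {A : Matrix n n ℂ} (hA : A.IsHermitian) (p : ℝ) :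
    mpow A p = cfc (fun x : ℝ => x ^ p) A := by
  rw [hA.cfc_eq, mpow, dif_pos hA, Matrix.IsHermitian.cfc, Unitary.conjStarAlgAut_apply]
  rfl

lemma spectral_form {A : Matrix n n ℂ} (hA : A.IsHermitian) :
    A = (hA.eigenvectorUnitary : Matrix n n ℂ) *
      Matrix.diagonal (fun i => ((hA.eigenvalues i : ℝ) : ℂ)) *
      (star (hA.eigenvectorUnitary : Matrix n n ℂ)) := by
  conv_lhs => rw [hA.spectral_theorem, Unitary.conjStarAlgAut_apply]
  rfl

lemma conj_diag_herm (U : Matrix n n ℂ) (a : n → ℝ) :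
    (U * diagonal (fun i => ((a i : ℝ) : ℂ)) * star U).IsHermitian := by
  rw [star_eq_conjTranspose]
  apply Matrix.isHermitian_mul_mul_conjTranspose
  rw [Matrix.isHermitian_diagonal_iff]
  intro i
  simp [IsSelfAdjoint]

lemma mpow_conj_diag (U : Matrix n n ℂ) (hU : star U * U = 1) (a : n → ℝ) (p : ℝ) :
    mpow (U * diagonal (fun i => ((a i : ℝ) : ℂ)) * star U) p =
      U * diagonal (fun i => ((a i ^ p : ℝ) : ℂ)) * star U := by
  have hU' : U * star U = 1 := mul_eq_one_comm.mp hU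
  set A := U * diagonal (fun i => ((a i : ℝ) : ℂ)) * star U with hAdef
  have hA : A.IsHermitian := conj_diag_herm U a
  rw [mpow, dif_pos hA]
  set V := (hA.eigenvectorUnitary : Matrix n n ℂ) with hV
  set b := hA.eigenvalues with hb
  have hVV : star V * V = 1 := Unitary.coe_star_mul_self hA.eigenvectorUnitary
  have hVV' : V * star V = 1 := mul_eq_one_comm.mp hVV
  have hspec : A = V * diagonal (fun i => ((b i : ℝ) : ℂ)) * star V := spectral_form hA
  have h1 : diagonal (fun i => ((b i : ℝ) : ℂ)) * (star V * U) =
      (star V * U) * diagonal (fun i => ((a i : ℝ) : ℂ)) := by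
    have : star V * A * U = star V * A * U := rfl
    conv_lhs at this => rw [hspec]
    conv_rhs at this => rw [hAdef]
    calc _ = (star V * V) * diagonal (fun i => ((b i : ℝ) : ℂ)) * (star V * U) := by
            rw [hVV, one_mul]
      _ = star V * U * diagonal (fun i => ((a i : ℝ) : ℂ)) * (star U * U) := by
            simpa only [mul_assoc] using this
      _ = _ := by rw [hU, mul_one]
  have h2 : diagonal (fun i => ((b i ^ p : ℝ) : ℂ)) * (star V * U) =
      (star V * U) * diagonal (fun i => ((a i ^ p : ℝ) : ℂ)) := by
    ext i j
    have := congrFun (congrFun h1 i) j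
    rw [diagonal_mul, mul_diagonal] at this ⊢
    by_cases h : (star V * U) i j = 0
    · simp [h]
    · have hab : ((b i : ℝ) : ℂ) = a j := by
        rw [mul_comm] at this
        exact mul_left_cancel₀ h this
      have : b i = a j := by exact_mod_cast hab
      rw [this, mul_comm]
  calc V * diagonal (fun i => ((b i ^ p : ℝ) : ℂ)) * star V
      = V * (diagonal (fun i => ((b i ^ p : ℝ) : ℂ)) * (star V * U)) * star U := by
        simp only [mul_assoc, hU', mul_one]
    _ = (V * star V) * U * diagonal (fun i => ((a i ^ p : ℝ) : ℂ)) * star U := by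
        rw [h2]; simp only [mul_assoc]
    _ = _ := by rw [hVV', one_mul]

/-- Diagonalisation packaged existentially. -/
lemma exists_diag {A : Matrix n n ℂ} (hA : A.IsHermitian) :
    ∃ (U : Matrix n n ℂ) (a : n → ℝ), star U * U = 1 ∧ U * star U = 1 ∧
      (∀ p, mpow A p = U * diagonal (fun i => ((a i ^ p : ℝ) : ℂ)) * star U) ∧
      A = U * diagonal (fun i => ((a i : ℝ) : ℂ)) * star U ∧ a = hA.eigenvalues := by
  refine ⟨hA.eigenvectorUnitary, hA.eigenvalues, Unitary.coe_star_mul_self _,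
    Unitary.coe_mul_star_self _, fun p => ?_, spectral_form hA, rfl⟩
  rw [mpow, dif_pos hA]

lemma exists_diag_psd {A : Matrix n n ℂ} (hA : A.PosSemidef) :
    ∃ (U : Matrix n n ℂ) (a : n → ℝ), star U * U = 1 ∧ U * star U = 1 ∧
      (∀ p, mpow A p = U * diagonal (fun i => ((a i ^ p : ℝ) : ℂ)) * star U) ∧
      A = U * diagonal (fun i => ((a i : ℝ) : ℂ)) * star U ∧ (∀ i, 0 ≤ a i) := by
  obtain ⟨U, a, h1, h2, h3, h4, h5⟩ := exists_diag hA.1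
  exact ⟨U, a, h1, h2, h3, h4, fun i => h5 ▸ hA.eigenvalues_nonneg i⟩

lemma exists_diag_pd {A : Matrix n n ℂ} (hA : A.PosDef) :
    ∃ (U : Matrix n n ℂ) (a : n → ℝ), star U * U = 1 ∧ U * star U = 1 ∧
      (∀ p, mpow A p = U * diagonal (fun i => ((a i ^ p : ℝ) : ℂ)) * star U) ∧
      A = U * diagonal (fun i => ((a i : ℝ) : ℂ)) * star U ∧ (∀ i, 0 < a i) := by
  obtain ⟨U, a, h1, h2, h3, h4, h5⟩ := exists_diag hA.1
  exact ⟨U, a, h1, h2, h3, h4, fun i => h5 ▸ hA.eigenvalues_pos i⟩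

lemma mpow_herm (A : Matrix n n ℂ) (p : ℝ) : (mpow A p).IsHermitian := by
  by_cases hA : A.IsHermitian
  · obtain ⟨U, a, h1, h2, h3, h4, h5⟩ := exists_diag hA
    rw [h3]; exact conj_diag_herm U _
  · rw [mpow, dif_neg hA]; exact Matrix.isHermitian_zero

lemma mpow_psd {A : Matrix n n ℂ} (hA : A.PosSemidef) (p : ℝ) : (mpow A p).PosSemidef := by
  obtain ⟨U, a, h1, h2, h3, h4, h5⟩ := exists_diag_psd hA
  rw [h3, star_eq_conjTranspose]
  apply Matrix.PosSemidef.mul_mul_conjTranspose_same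
  rw [Matrix.posSemidef_diagonal_iff]
  intro i
  exact_mod_cast Real.rpow_nonneg (h5 i) p

lemma mpow_add {A : Matrix n n ℂ} (hA : A.PosDef) (p q : ℝ) :
    mpow A p * mpow A q = mpow A (p + q) := by
  obtain ⟨U, a, h1, h2, h3, h4, h5⟩ := exists_diag_pd hA
  rw [h3, h3, h3]
  calc _ = U * diagonal (fun i => ((a i ^ p : ℝ) : ℂ)) * (star U * U) *
        diagonal (fun i => ((a i ^ q : ℝ) : ℂ)) * star U := by simp only [mul_assoc]
    _ = _ := by
      rw [h1, mul_one, mul_assoc U, diagonal_mul_diagonal]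
      congr 3; ext i
      rw [Real.rpow_add (h5 i)]; push_cast; rfl

lemma mpow_add' {A : Matrix n n ℂ} (hA : A.PosSemidef) {p q : ℝ} (hp : 0 ≤ p) (hq : 0 ≤ q) :
    mpow A p * mpow A q = mpow A (p + q) := by
  obtain ⟨U, a, h1, h2, h3, h4, h5⟩ := exists_diag_psd hA
  rw [h3, h3, h3]
  calc _ = U * diagonal (fun i => ((a i ^ p : ℝ) : ℂ)) * (star U * U) *
        diagonal (fun i => ((a i ^ q : ℝ) : ℂ)) * star U := by simp only [mul_assoc]
    _ = _ := by
      rw [h1, mul_one, mul_assoc U, diagonal_mul_diagonal]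
      congr 3; ext i
      rw [Real.rpow_add_of_nonneg (h5 i) hp hq]; push_cast; rfl

lemma mpow_mul {A : Matrix n n ℂ} (hA : A.PosSemidef) (p q : ℝ) :
    mpow (mpow A p) q = mpow A (p * q) := by
  obtain ⟨U, a, h1, h2, h3, h4, h5⟩ := exists_diag_psd hA
  rw [h3, h3, mpow_conj_diag U h1]
  congr 3; ext i
  rw [Real.rpow_mul (h5 i)]

lemma mpow_zero {A : Matrix n n ℂ} (hA : A.IsHermitian) : mpow A 0 = 1 := by
  obtain ⟨U, a, h1, h2, h3, h4, h5⟩ := exists_diag hA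
  rw [h3]; simp [h2]

lemma mpow_one {A : Matrix n n ℂ} (hA : A.IsHermitian) : mpow A 1 = A := by
  obtain ⟨U, a, h1, h2, h3, h4, h5⟩ := exists_diag hA
  rw [h3]; simp only [Real.rpow_one]; exact h4.symm

lemma mpow_isUnit {A : Matrix n n ℂ} (hA : A.PosDef) (p : ℝ) : IsUnit (mpow A p) := by
  refine IsUnit.of_mul_eq_one (mpow A (-p)) ?_
  rw [mpow_add hA, add_neg_cancel, mpow_zero hA.1]

lemma mpow_pd {A : Matrix n n ℂ} (hA : A.PosDef) (p : ℝ) : (mpow A p).PosDef := 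
  (mpow_psd hA.posSemidef p).posDef_iff_isUnit.mpr (mpow_isUnit hA p)

lemma mpow_smul {A : Matrix n n ℂ} (hA : A.PosSemidef) {c : ℝ} (hc : 0 ≤ c) (p : ℝ) :
    mpow (c • A) p = (c ^ p) • mpow A p := by
  obtain ⟨U, a, h1, h2, h3, h4, h5⟩ := exists_diag_psd hA
  rw [h3]
  have : c • A = U * diagonal (fun i => (((c * a i) : ℝ) : ℂ)) * star U := by
    rw [h4, ← smul_mul_assoc, ← mul_smul_comm, ← diagonal_smul]
    congr 3; ext i; simp
  rw [this, mpow_conj_diag U h1, ← smul_mul_assoc, ← mul_smul_comm, ← diagonal_smul]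
  congr 3; ext i; simp [Real.mul_rpow hc (h5 i)]

lemma mpow_kron {m : Type*} [Fintype m] [DecidableEq m] {A : Matrix n n ℂ} (hA : A.IsHermitian)
    (p : ℝ) : (1 : Matrix m m ℂ) ⊗ₖ mpow A p = mpow ((1 : Matrix m m ℂ) ⊗ₖ A) p := by
  obtain ⟨U, a, h1, h2, h3, h4, h5⟩ := exists_diag hA
  have key : ∀ c : n → ℝ, (1 : Matrix m m ℂ) ⊗ₖ (U * diagonal (fun i => ((c i : ℝ) : ℂ)) * star U)
      = ((1 : Matrix m m ℂ) ⊗ₖ U) * diagonal (fun i : m × n => ((c i.2 : ℝ) : ℂ)) *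
        star ((1 : Matrix m m ℂ) ⊗ₖ U) := by
    intro c
    have : diagonal (fun i : m × n => ((c i.2 : ℝ) : ℂ)) =
       (1 : Matrix m m ℂ) ⊗ₖ diagonal (fun i => ((c i : ℝ) : ℂ)) := by
      rw [← diagonal_one, diagonal_kronecker_diagonal]; simp
    rw [this, star_eq_conjTranspose, star_eq_conjTranspose, conjTranspose_kronecker,
      ← mul_kronecker_mul, ← mul_kronecker_mul]
    simp
  rw [h3, key]
  conv_rhs => rw [h4, key]
  rw [mpow_conj_diag]
  rw [star_eq_conjTranspose, conjTranspose_kronecker, ← mul_kronecker_mul,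
    ← star_eq_conjTranspose U, h1]
  simp

lemma mpow_trace_charpoly {A B : Matrix n n ℂ} (hA : A.IsHermitian) (hB : B.IsHermitian)
    (h : A.charpoly = B.charpoly) (p : ℝ) : (mpow A p).trace = (mpow B p).trace := by
  have key : ∀ {A : Matrix n n ℂ} (hA : A.IsHermitian), (mpow A p).trace =
      (A.charpoly.roots.map (fun z : ℂ => ((z.re ^ p : ℝ) : ℂ))).sum := by
    intro A hA
    rw [hA.roots_charpoly_eq_eigenvalues, mpow, dif_pos hA, mul_assoc, trace_mul_comm, mul_assoc,
      Unitary.coe_star_mul_self, mul_one, trace_diagonal]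
    simp
  rw [key hA, key hB, h]

open scoped Matrix.Norms.L2Operator in
lemma mpow_continuous {X : ℝ → Matrix n n ℂ} (hX : Continuous X) (hH : ∀ t, (X t).IsHermitian)
    {p : ℝ} (hp : 0 ≤ p) : Continuous (fun t => mpow (X t) p) := by
  simp_rw [fun t => mpow_eq_cfc (hH t) p]
  refine Continuous.cfc_of_mem_nhdsSet (s := Set.univ) _ Filter.univ_mem hX (fun t => hH t) ?_
  exact (Real.continuous_rpow_const hp).continuousOn

end helpers

section traceineq
variable {n : Type*} [Fintype n] [DecidableEq n]

lemma trace_formula (U V K : Matrix n n ℂ) (a b : n → ℝ) :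
    (Kᴴ * (U * diagonal (fun i => ((a i : ℝ) : ℂ)) * star U) * K *
      (V * diagonal (fun i => ((b i : ℝ) : ℂ)) * star V)).trace.re =
    ∑ i, ∑ j, a i * b j * Complex.normSq ((star U * K * V) i j) := by
  have h1 : (Kᴴ * (U * diagonal (fun i => ((a i : ℝ) : ℂ)) * star U) * K *
      (V * diagonal (fun i => ((b i : ℝ) : ℂ)) * star V)).trace =
      ((star U * K * V)ᴴ * diagonal (fun i => ((a i : ℝ) : ℂ)) * (star U * K * V) *
        diagonal (fun i => ((b i : ℝ) : ℂ))).trace := by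
    rw [← mul_assoc, ← mul_assoc, trace_mul_comm]
    simp only [conjTranspose_mul, star_eq_conjTranspose, conjTranspose_conjTranspose, mul_assoc]
  rw [h1, trace, Finset.sum_comm, Complex.re_sum]
  refine Finset.sum_congr rfl fun j _ => ?_
  rw [diag_apply, mul_diagonal, mul_apply, Finset.sum_mul, Complex.re_sum]
  refine Finset.sum_congr rfl fun i _ => ?_
  rw [mul_diagonal, conjTranspose_apply]
  generalize (star U * K * V) i j = w
  simp [Complex.normSq_apply]
  ring

lemma scalar_par {t : ℝ} (ht : 0 < t) {a b : ℝ} (ha : 0 ≤ a) (hb : 0 ≤ b) (k y : ℂ) :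
    t * (a * b / (a + t * b) * Complex.normSq k) ≤
      a * Complex.normSq (k - y) + t * (b * Complex.normSq y) := by
  have htb : 0 ≤ t * b := by positivity
  rcases eq_or_lt_of_le (add_nonneg ha htb) with h | h
  · rw [← h]; simp only [div_zero, zero_mul, mul_zero]
    have := Complex.normSq_nonneg (k - y)
    have := Complex.normSq_nonneg y
    positivity
  · have : t * (a * b / (a + t * b) * Complex.normSq k) =
      (t * a * b * Complex.normSq k) / (a + t * b) := by ring
    rw [this, div_le_iff₀ h]
    simp only [Complex.normSq_apply, Complex.sub_re, Complex.sub_im]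
    nlinarith [sq_nonneg (a * k.re - (a + t * b) * y.re), sq_nonneg (a * k.im - (a + t * b) * y.im)]

lemma scalar_par_eq {t : ℝ} (ht : 0 < t) {a b : ℝ} (ha : 0 ≤ a) (hb : 0 ≤ b) (k : ℂ) :
    t * (a * b / (a + t * b) * Complex.normSq k) =
      a * Complex.normSq (k - ((a / (a + t * b) : ℝ) : ℂ) * k) +
        t * (b * Complex.normSq (((a / (a + t * b) : ℝ) : ℂ) * k)) := by
  have htb : 0 ≤ t * b := by positivity
  rcases eq_or_lt_of_le (add_nonneg ha htb) with h | h
  · have ha0 : a = 0 := by linarith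
    have hb0 : b = 0 := by
      have : t * b = 0 := by linarith
      simpa [ht.ne'] using this
    simp [ha0, hb0]
  · have h' : a + t * b ≠ 0 := h.ne'
    simp only [Complex.normSq_apply, Complex.sub_re, Complex.sub_im, Complex.mul_re, Complex.mul_im,
      Complex.ofReal_re, Complex.ofReal_im]
    field_simp
    ring

lemma exists_meas {s : ℝ} (hs : s ∈ Set.Ioo (0:ℝ) 1) : ∃ m : Measure ℝ, ∀ a b : ℝ, 0 ≤ a → 0 ≤ b →
    IntegrableOn (fun t => t ^ (s - 1) * (a * b / (a + t * b))) (Set.Ioi 0) m ∧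
    a ^ s * b ^ (1 - s) = ∫ t in Set.Ioi 0, t ^ (s - 1) * (a * b / (a + t * b)) ∂m := by
  obtain ⟨m, hm⟩ := Real.exists_measure_rpow_eq_integral_rpowIntegrand₀₁ hs
  refine ⟨m, fun a b ha hb => ?_⟩
  rcases eq_or_lt_of_le hb with h | h
  · subst h
    have : (1 - s) ≠ 0 := by have := hs.2; linarith
    simp [Real.zero_rpow this]
  · obtain ⟨h1, h2⟩ := hm (a / b) (by simp; positivity)
    have heq : Set.EqOn (fun t => b * Real.rpowIntegrand₀₁ s t (a / b))
        (fun t => t ^ (s - 1) * (a * b / (a + t * b))) (Set.Ioi 0) := by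
      intro t ht
      have ht' : 0 < t := ht
      simp only [Real.rpowIntegrand₀₁]
      rw [Real.rpow_sub_one ht'.ne']
      have : t + a / b ≠ 0 := by positivity
      have : a + t * b ≠ 0 := by positivity
      have : t * b + a ≠ 0 := by positivity
      field_simp
      ring
    constructor
    · exact (IntegrableOn.congr_fun (h1.const_mul b) heq measurableSet_Ioi)
    · rw [← setIntegral_congr_fun measurableSet_Ioi heq, integral_const_mul, ← h2,
        Real.div_rpow ha hb, Real.rpow_sub h, Real.rpow_one]
      ring

/-- Lieb concavity theorem, in superadditive form. -/
lemma lieb {s : ℝ} (hs : s ∈ Set.Ioc (0:ℝ) 1) (K : Matrix n n ℂ) {A₁ A₂ B₁ B₂ : Matrix n n ℂ}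
    (hA₁ : A₁.PosSemidef) (hA₂ : A₂.PosSemidef) (hB₁ : B₁.PosSemidef) (hB₂ : B₂.PosSemidef) :
    (Kᴴ * mpow A₁ s * K * mpow B₁ (1 - s)).trace.re +
      (Kᴴ * mpow A₂ s * K * mpow B₂ (1 - s)).trace.re ≤
    (Kᴴ * mpow (A₁ + A₂) s * K * mpow (B₁ + B₂) (1 - s)).trace.re := by
  rcases eq_or_lt_of_le hs.2 with h | hs1
  · subst h
    simp only [sub_self]
    rw [mpow_zero hB₁.1, mpow_zero hB₂.1, mpow_zero (hB₁.add hB₂).1, mpow_one hA₁.1,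
      mpow_one hA₂.1, mpow_one (hA₁.add hA₂).1]
    simp [mul_add, add_mul, trace_add]
  obtain ⟨m, hm⟩ := exists_meas ⟨hs.1, hs1⟩
  -- linear functional
  let L : ℝ → Matrix n n ℂ → Matrix n n ℂ → Matrix n n ℂ → ℝ := fun t Y A B =>
    ((K - Y)ᴴ * A * (K - Y) * 1).trace.re + t * (Yᴴ * 1 * Y * B).trace.re
  have main : ∀ {A B : Matrix n n ℂ}, A.PosSemidef → B.PosSemidef → ∃ Q : ℝ → ℝ,
      IntegrableOn (fun t => t ^ (s - 1) * Q t) (Set.Ioi 0) m ∧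
      (Kᴴ * mpow A s * K * mpow B (1 - s)).trace.re =
        ∫ t in Set.Ioi 0, t ^ (s - 1) * Q t ∂m ∧
      (∀ t, 0 < t → ∀ Y, t * Q t ≤ L t Y A B) ∧
      (∀ t, 0 < t → ∃ Y, t * Q t = L t Y A B) := by
    intro A B hA hB
    obtain ⟨U, a, hU, hU', hUp, hUA, ha⟩ := exists_diag_psd hA
    obtain ⟨V, b, hV, hV', hVp, hVB, hb⟩ := exists_diag_psd hB
    have hone : ∀ (U : Matrix n n ℂ), U * star U = 1 →
        (1 : Matrix n n ℂ) = U * diagonal (fun i => (((fun _ => 1 : n → ℝ) i : ℝ) : ℂ)) * star U := by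
      intro U hU; simp [hU]
    have hL : ∀ t Y, L t Y A B = ∑ i, ∑ j,
        (a i * Complex.normSq ((star U * K * V) i j - (star U * Y * V) i j) +
          t * (b j * Complex.normSq ((star U * Y * V) i j))) := by
      intro t Y
      have e1 := trace_formula U V (K - Y) a (fun _ => 1)
      have e2 := trace_formula U V Y (fun _ => 1) b
      rw [← hone V hV', ← hUA] at e1
      rw [← hone U hU', ← hVB] at e2
      simp only [L]
      rw [e1, e2, Finset.mul_sum, ← Finset.sum_add_distrib]
      refine Finset.sum_congr rfl fun i _ => ?_
      rw [Finset.mul_sum, ← Finset.sum_add_distrib]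
      refine Finset.sum_congr rfl fun j _ => ?_
      rw [mul_sub, sub_mul, Matrix.sub_apply]
      ring
    refine ⟨fun t => ∑ i, ∑ j, a i * b j / (a i + t * b j) * Complex.normSq ((star U * K * V) i j),
      ?_, ?_, ?_, ?_⟩
    · simp_rw [Finset.mul_sum, ← mul_assoc]
      refine integrable_finsetSum _ fun i _ => integrable_finsetSum _ fun j _ => ?_
      exact (hm (a i) (b j) (ha i) (hb j)).1.mul_const _
    · rw [hUp, hVp, trace_formula U V K]
      simp_rw [Finset.mul_sum, ← mul_assoc]
      rw [integral_finsetSum]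
      · refine Finset.sum_congr rfl fun i _ => ?_
        rw [integral_finsetSum]
        · refine Finset.sum_congr rfl fun j _ => ?_
          rw [integral_mul_const, (hm (a i) (b j) (ha i) (hb j)).2]
        · intro j _
          exact (hm (a i) (b j) (ha i) (hb j)).1.mul_const _
      · intro i _
        refine integrable_finsetSum _ fun j _ => ?_
        exact (hm (a i) (b j) (ha i) (hb j)).1.mul_const _
    · intro t ht Y
      rw [hL]
      simp_rw [Finset.mul_sum]
      exact Finset.sum_le_sum fun i _ => Finset.sum_le_sum fun j _ =>
        scalar_par ht (ha i) (hb j) _ _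
    · intro t ht
      refine ⟨U * (Matrix.of fun i j => ((a i / (a i + t * b j) : ℝ) : ℂ) * (star U * K * V) i j) *
        star V, ?_⟩
      rw [hL]
      simp_rw [Finset.mul_sum]
      refine Finset.sum_congr rfl fun i _ => Finset.sum_congr rfl fun j _ => ?_
      have : ∀ Z : Matrix n n ℂ, star U * (U * Z * star V) * V = Z := by
        intro Z
        calc _ = (star U * U) * Z * (star V * V) := by simp only [mul_assoc]
          _ = Z := by rw [hU, hV, one_mul, mul_one]
      rw [this]
      exact scalar_par_eq ht (ha i) (hb j) _
  obtain ⟨Q1, i1, e1, l1, -⟩ := main hA₁ hB₁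
  obtain ⟨Q2, i2, e2, l2, -⟩ := main hA₂ hB₂
  obtain ⟨Q, i3, e3, -, l3⟩ := main (hA₁.add hA₂) (hB₁.add hB₂)
  rw [e1, e2, e3, ← integral_add i1 i2]
  refine setIntegral_mono_on (i1.add i2) i3 measurableSet_Ioi fun t ht => ?_
  have ht' : 0 < t := ht
  obtain ⟨Y, hY⟩ := l3 t ht'
  have hl1 := l1 t ht' Y
  have hl2 := l2 t ht' Y
  have hadd : L t Y (A₁ + A₂) (B₁ + B₂) = L t Y A₁ B₁ + L t Y A₂ B₂ := by
    simp only [L, mul_add, add_mul, trace_add, Complex.add_re]; ring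
  have : Q1 t + Q2 t ≤ Q t := by
    have : t * (Q1 t + Q2 t) ≤ t * Q t := by rw [hY, hadd]; linarith
    exact le_of_mul_le_mul_left this ht'
  have h0 : 0 ≤ t ^ (s - 1) := Real.rpow_nonneg ht'.le _
  rw [← mul_add]
  exact mul_le_mul_of_nonneg_left this h0

lemma young_gen {X Y : Matrix n n ℂ} (hX : X.PosSemidef) (hY : Y.PosSemidef)
    (p q p' q' c d : ℝ)
    (h : ∀ x y : ℝ, 0 ≤ x → (0 ≤ y ∧ (Y.PosDef → 0 < y)) → x ^ p * y ^ q ≤ c * x ^ p' + d * y ^ q') :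
    (mpow X p * mpow Y q).trace.re ≤ c * (mpow X p').trace.re + d * (mpow Y q').trace.re := by
  obtain ⟨U, a, hU, hU', hUp, hUA, ha⟩ := exists_diag_psd hX
  obtain ⟨V, b, hV, hV', hVp, hVB, hb⟩ := exists_diag hY.1
  have hf := fun p q : ℝ => trace_formula U V 1 (fun i => a i ^ p) (fun i => b i ^ q)
  simp only [conjTranspose_one, one_mul, mul_one, ← hUp, ← hVp] at hf
  have h1 := hf p' 0
  have h2 := hf 0 q'
  rw [mpow_zero hY.1, mul_one] at h1
  rw [mpow_zero hX.1, one_mul] at h2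
  rw [hf, h1, h2, Finset.mul_sum, Finset.mul_sum, ← Finset.sum_add_distrib]
  refine Finset.sum_le_sum fun i _ => ?_
  rw [Finset.mul_sum, Finset.mul_sum, ← Finset.sum_add_distrib]
  refine Finset.sum_le_sum fun j _ => ?_
  have := h (a i) (b j) (ha i) ⟨hb ▸ hY.eigenvalues_nonneg j, fun hY' => hb ▸ hY'.eigenvalues_pos j⟩
  have hn := Complex.normSq_nonneg ((star U * V) i j)
  simp only [Real.rpow_zero]
  nlinarith [mul_le_mul_of_nonneg_right this hn]

lemma young2 {Z X : Matrix n n ℂ} (hZ : Z.PosSemidef) (hX : X.PosSemidef) {s : ℝ}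
    (hs : s ∈ Set.Ioc (0:ℝ) 1) :
    (Z * mpow X (1 - s)).trace.re ≤ s * (mpow Z (1/s)).trace.re + (1 - s) * X.trace.re := by
  have := young_gen hZ hX 1 (1 - s) (1/s) 1 s (1-s) ?_
  · rwa [mpow_one hZ.1, mpow_one hX.1] at this
  · rintro x y hx ⟨hy, -⟩
    have := Real.geom_mean_le_arith_mean2_weighted hs.1.le (by linarith [hs.2] : 0 ≤ 1 - s)
      (Real.rpow_nonneg hx (1/s)) hy (by ring)
    rw [← Real.rpow_mul hx, one_div_mul_cancel hs.1.ne'] at this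
    rwa [Real.rpow_one y]

end traceineq

section mainineq
variable {n : Type*} [Fintype n] [DecidableEq n]

lemma young1 {X G : Matrix n n ℂ} (hX : X.PosSemidef) (hG : G.PosDef) {α : ℝ}
    (hα : α ∈ Set.Ioo (0:ℝ) 1) :
    (mpow X α).trace.re ≤ α * (X * mpow G (-1)).trace.re +
      (1 - α) * (mpow G (α/(1-α))).trace.re := by
  obtain ⟨U, a, hU, hU', hUp, hUA, ha⟩ := exists_diag_psd hX
  obtain ⟨V, b, hV, hV', hVp, hVB, hb⟩ := exists_diag_pd hG
  have hf := fun p q : ℝ => trace_formula U V 1 (fun i => a i ^ p) (fun i => b i ^ q)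
  simp only [conjTranspose_one, one_mul, mul_one, ← hUp, ← hVp] at hf
  have h0 := hf α 0
  have h1 := hf 1 (-1)
  have h2 := hf 0 (α/(1-α))
  rw [mpow_zero hG.1, mul_one] at h0
  rw [mpow_one hX.1] at h1
  rw [mpow_zero hX.1, one_mul] at h2
  rw [h0, h1, h2, Finset.mul_sum, Finset.mul_sum, ← Finset.sum_add_distrib]
  refine Finset.sum_le_sum fun i _ => ?_
  rw [Finset.mul_sum, Finset.mul_sum, ← Finset.sum_add_distrib]
  refine Finset.sum_le_sum fun j _ => ?_
  have hn := Complex.normSq_nonneg ((star U * V) i j)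
  have hx := ha i
  have hg := hb j
  have h1α : 0 < 1 - α := by linarith [hα.2]
  have key := Real.geom_mean_le_arith_mean2_weighted hα.1.le h1α.le
      (mul_nonneg hx (Real.rpow_nonneg hg.le (-1))) (Real.rpow_nonneg hg.le (α/(1-α))) (by ring)
  rw [Real.mul_rpow hx (Real.rpow_nonneg hg.le _), ← Real.rpow_mul hg.le, ← Real.rpow_mul hg.le,
    div_mul_cancel₀ _ h1α.ne', mul_assoc, ← Real.rpow_add hg] at key
  simp only [neg_mul, one_mul, neg_add_cancel, Real.rpow_zero, mul_one] at key
  simp only [Real.rpow_zero, Real.rpow_one]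
  nlinarith [mul_le_mul_of_nonneg_right key hn]

/-- Epstein theorem, in superadditive form. -/
lemma epstein {s : ℝ} (hs : s ∈ Set.Ioc (0:ℝ) 1) {K : Matrix n n ℂ} (hK : K.IsHermitian)
    {N₁ N₂ : Matrix n n ℂ} (h₁ : N₁.PosSemidef) (h₂ : N₂.PosSemidef) :
    (mpow (K * mpow N₁ s * K) (1/s)).trace.re + (mpow (K * mpow N₂ s * K) (1/s)).trace.re ≤
      (mpow (K * mpow (N₁ + N₂) s * K) (1/s)).trace.re := by
  have hs0 := hs.1
  have hs1 := hs.2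
  have hZ : ∀ {N : Matrix n n ℂ}, N.PosSemidef → (K * mpow N s * K).PosSemidef := by
    intro N hN
    have := (mpow_psd hN s).mul_mul_conjTranspose_same K
    rwa [hK.eq] at this
  have hX : ∀ {N : Matrix n n ℂ}, N.PosSemidef → (mpow (K * mpow N s * K) (1/s)).PosSemidef :=
    fun hN => mpow_psd (hZ hN) _
  have hEq : ∀ {N : Matrix n n ℂ}, N.PosSemidef →
      K * mpow N s * K * mpow (mpow (K * mpow N s * K) (1/s)) (1 - s) =
        mpow (K * mpow N s * K) (1/s) := by
    intro N hN
    have h1s : 0 ≤ 1/s * (1 - s) := by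
      have : 0 ≤ 1 - s := by linarith
      positivity
    rw [mpow_mul (hZ hN)]
    nth_rewrite 1 [← mpow_one (hZ hN).1]
    rw [mpow_add' (hZ hN) zero_le_one h1s]
    congr 1; field_simp; ring
  have hl := lieb hs K h₁ h₂ (hX h₁) (hX h₂)
  rw [hK.eq, hEq h₁, hEq h₂] at hl
  have hy := young2 (hZ (h₁.add h₂)) ((hX h₁).add (hX h₂)) hs
  rw [trace_add, Complex.add_re] at hy
  set x := (mpow (K * mpow N₁ s * K) (1/s)).trace.re + (mpow (K * mpow N₂ s * K) (1/s)).trace.re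
  have : s * x ≤ s * (mpow (K * mpow (N₁ + N₂) s * K) (1/s)).trace.re := by linarith
  exact le_of_mul_le_mul_left this hs0

lemma mpow_neg_one_eq {G B : Matrix n n ℂ} (hG : G.PosDef) (h : G * B = 1) :
    mpow G (-1) = B := by
  have h1 : mpow G (-1) * G = 1 := by
    conv_lhs => rw [← mpow_one hG.1, mpow_mul hG.posSemidef]
    rw [mpow_add hG, ← mpow_zero hG.1]; norm_num
  calc mpow G (-1) = mpow G (-1) * (G * B) := by rw [h, mul_one]
    _ = B := by rw [← mul_assoc, h1, one_mul]

lemma conj_pd {A N : Matrix n n ℂ} (hN : N.PosDef) (hA : A.PosDef) (r : ℝ) :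
    (mpow N r * A * mpow N r).PosDef := by
  have hp := hA.posSemidef.mul_mul_conjTranspose_same (mpow N r)
  rw [(mpow_herm N r).eq] at hp
  rw [hp.posDef_iff_isUnit]
  exact ((mpow_isUnit hN r).mul hA.isUnit).mul (mpow_isUnit hN r)

lemma conj_psd {A N : Matrix n n ℂ} (hA : A.PosSemidef) (r : ℝ) :
    (mpow N r * A * mpow N r).PosSemidef := by
  have hp := hA.mul_mul_conjTranspose_same (mpow N r)
  rwa [(mpow_herm N r).eq] at hp

lemma pow_cancel {N : Matrix n n ℂ} (hN : N.PosDef) (r : ℝ) : mpow N r * mpow N (-r) = 1 := by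
  rw [mpow_add hN, add_neg_cancel, mpow_zero hN.1]

lemma pow_cancel' {N : Matrix n n ℂ} (hN : N.PosDef) (r : ℝ) : mpow N (-r) * mpow N r = 1 := by
  rw [mpow_add hN, neg_add_cancel, mpow_zero hN.1]

lemma conj_swap {N J : Matrix n n ℂ} (hN : N.PosDef) (hJ : J.PosDef) (r q : ℝ) :
    (mpow (mpow N r * J * mpow N r) q).trace =
      (mpow (mpow J (1/2) * mpow N (2*r) * mpow J (1/2)) q).trace := by
  apply mpow_trace_charpoly (conj_pd hN hJ r).1 (conj_pd hJ (mpow_pd hN _) _).1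
  have e1 : mpow N r * J * mpow N r = (mpow N r * mpow J (1/2)) * (mpow J (1/2) * mpow N r) := by
    conv_lhs => rw [← mpow_one hJ.1, show (1:ℝ) = 1/2 + 1/2 by norm_num, ← mpow_add hJ]
    simp only [mul_assoc]
  have e2 : mpow J (1/2) * mpow N (2*r) * mpow J (1/2) =
      (mpow J (1/2) * mpow N r) * (mpow N r * mpow J (1/2)) := by
    rw [two_mul, ← mpow_add hN]
    simp only [mul_assoc]
  rw [e1, e2, charpoly_mul_comm]

lemma sand_upper {α : ℝ} (hα : α ∈ Set.Ioo (0:ℝ) 1) {M N J : Matrix n n ℂ}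
    (hM : M.PosDef) (hN : N.PosDef) (hJ : J.PosDef) (r : ℝ) :
    (mpow (mpow N r * M * mpow N r) α).trace.re ≤ α * (M * mpow J (-1)).trace.re +
      (1 - α) * (mpow (mpow J (1/2) * mpow N (2*r) * mpow J (1/2)) (α/(1-α))).trace.re := by
  have h := young1 (conj_pd hN hM r).posSemidef (conj_pd hN hJ r) hα
  rw [conj_swap hN hJ] at h
  have hJ1 : J * mpow J (-1) = 1 := by
    have := pow_cancel hJ 1
    rwa [mpow_one hJ.1] at this
  have hinv : mpow (mpow N r * J * mpow N r) (-1) = mpow N (-r) * mpow J (-1) * mpow N (-r) := by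
    apply mpow_neg_one_eq (conj_pd hN hJ r)
    calc _ = mpow N r * (J * ((mpow N r * mpow N (-r)) * mpow J (-1))) * mpow N (-r) := by
            simp only [mul_assoc]
      _ = 1 := by rw [pow_cancel hN, one_mul, hJ1, mul_one, pow_cancel hN]
  rw [hinv] at h
  have ht : (mpow N r * M * mpow N r * (mpow N (-r) * mpow J (-1) * mpow N (-r))).trace =
      (M * mpow J (-1)).trace := by
    calc _ = (mpow N r * (M * ((mpow N r * mpow N (-r)) * mpow J (-1)) * mpow N (-r))).trace := by
            simp only [mul_assoc]
      _ = (M * mpow J (-1) * (mpow N (-r) * mpow N r)).trace := by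
            rw [pow_cancel hN, one_mul, trace_mul_comm, mul_assoc]
      _ = _ := by rw [pow_cancel' hN, mul_one]
  rwa [ht] at h

lemma sand_attained {α : ℝ} (hα : α ∈ Set.Ioo (0:ℝ) 1) {M N : Matrix n n ℂ}
    (hM : M.PosDef) (hN : N.PosDef) (r : ℝ) : ∃ J : Matrix n n ℂ, J.PosDef ∧
    (mpow (mpow N r * M * mpow N r) α).trace.re = α * (M * mpow J (-1)).trace.re +
      (1 - α) * (mpow (mpow J (1/2) * mpow N (2*r) * mpow J (1/2)) (α/(1-α))).trace.re := by
  have h1α : 0 < 1 - α := by linarith [hα.2]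
  set X := mpow N r * M * mpow N r with hXdef
  have hX : X.PosDef := conj_pd hN hM r
  have hJ : (mpow N (-r) * mpow X (1-α) * mpow N (-r)).PosDef := conj_pd hN (mpow_pd hX _) _
  refine ⟨_, hJ, ?_⟩
  rw [← conj_swap hN hJ]
  have hG : mpow N r * (mpow N (-r) * mpow X (1-α) * mpow N (-r)) * mpow N r = mpow X (1-α) := by
    calc _ = (mpow N r * mpow N (-r)) * mpow X (1-α) * (mpow N (-r) * mpow N r) := by
            simp only [mul_assoc]
      _ = _ := by rw [pow_cancel hN, pow_cancel' hN, one_mul, mul_one]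
  have hXX : mpow X (1-α) * mpow X (α-1) = 1 := by
    have := pow_cancel hX (1-α)
    rwa [neg_sub] at this
  have hinv : mpow (mpow N (-r) * mpow X (1-α) * mpow N (-r)) (-1) =
      mpow N r * mpow X (α-1) * mpow N r := by
    apply mpow_neg_one_eq hJ
    calc _ = mpow N (-r) * (mpow X (1-α) * ((mpow N (-r) * mpow N r) * mpow X (α-1))) *
            mpow N r := by simp only [mul_assoc]
      _ = 1 := by rw [pow_cancel' hN, one_mul, hXX, mul_one, pow_cancel' hN]
  rw [hG, hinv, mpow_mul hX.posSemidef, mul_div_cancel₀ _ h1α.ne']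
  have ht : (M * (mpow N r * mpow X (α-1) * mpow N r)).trace = (mpow X α).trace := by
    calc _ = (X * mpow X (α-1)).trace := by
            rw [hXdef, ← mul_assoc, trace_mul_comm]; simp only [mul_assoc]
      _ = _ := by
            nth_rewrite 1 [← mpow_one hX.1]
            rw [mpow_add hX]; congr 2; ring
  rw [ht]; ring

lemma sand_superadd_pd {α : ℝ} (hα : α ∈ Set.Ico (1/2:ℝ) 1) {M₁ M₂ N₁ N₂ : Matrix n n ℂ}
    (hM₁ : M₁.PosDef) (hM₂ : M₂.PosDef) (hN₁ : N₁.PosDef) (hN₂ : N₂.PosDef)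
    {r : ℝ} (hr : r = (1 - α)/(2*α)) :
    (mpow (mpow N₁ r * M₁ * mpow N₁ r) α).trace.re +
      (mpow (mpow N₂ r * M₂ * mpow N₂ r) α).trace.re ≤
    (mpow (mpow (N₁ + N₂) r * (M₁ + M₂) * mpow (N₁ + N₂) r) α).trace.re := by
  have hα' : α ∈ Set.Ioo (0:ℝ) 1 := ⟨by linarith [hα.1], hα.2⟩
  have h0 := hα'.1
  have h1α : 0 < 1 - α := by linarith [hα.2]
  obtain ⟨J, hJ, hE⟩ := sand_attained hα' (hM₁.add hM₂) (hN₁.add hN₂) r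
  have u1 := sand_upper hα' hM₁ hN₁ hJ r
  have u2 := sand_upper hα' hM₂ hN₂ hJ r
  have hs : (2*r) ∈ Set.Ioc (0:ℝ) 1 := by
    have e : 2*r = (1-α)/α := by rw [hr]; field_simp
    rw [e]
    refine ⟨by positivity, ?_⟩
    rw [div_le_one h0]; linarith [hα.1]
  have hq : α/(1-α) = 1/(2*r) := by rw [hr]; field_simp
  have ep := epstein hs (mpow_herm J (1/2)) hN₁.posSemidef hN₂.posSemidef
  rw [← hq] at ep
  rw [hE, add_mul, trace_add, Complex.add_re]
  nlinarith [mul_le_mul_of_nonneg_left ep h1α.le]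

lemma pd_add_smul_one {A : Matrix n n ℂ} (hA : A.PosSemidef) {d : ℝ} (hd : 0 < d) :
    (A + d • (1 : Matrix n n ℂ)).PosDef := 
  Matrix.PosDef.posSemidef_add hA (Matrix.PosDef.one.smul hd)

lemma smul_herm {Z : Matrix n n ℂ} (d : ℝ) (hZ : Z.IsHermitian) : (d • Z).IsHermitian := by
  rw [Matrix.IsHermitian, conjTranspose_smul, hZ.eq, star_trivial]

lemma sand_cont {α r : ℝ} (h0 : 0 ≤ α) (hr0 : 0 ≤ r) {M N A B : Matrix n n ℂ}
    (hM : M.IsHermitian) (hN : N.IsHermitian) (hA : A.IsHermitian) (hB : B.IsHermitian) :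
    Continuous (fun d : ℝ =>
      (mpow (mpow (N + d • B) r * (M + d • A) * mpow (N + d • B) r) α).trace.re) := by
  have cB : Continuous (fun d : ℝ => N + d • B) :=
    continuous_const.add (continuous_id.smul continuous_const)
  have cA : Continuous (fun d : ℝ => M + d • A) :=
    continuous_const.add (continuous_id.smul continuous_const)
  have c1 : Continuous (fun d : ℝ => mpow (N + d • B) r) :=
    mpow_continuous cB (fun d => hN.add (smul_herm d hB)) hr0
  have c2 : Continuous (fun d : ℝ =>
      mpow (mpow (N + d • B) r * (M + d • A) * mpow (N + d • B) r) α) := by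
    refine mpow_continuous ((c1.matrix_mul cA).matrix_mul c1) (fun d => ?_) h0
    have := Matrix.isHermitian_mul_mul_conjTranspose (mpow (N + d • B) r)
      (hM.add (smul_herm d hA))
    rwa [(mpow_herm _ _).eq] at this
  exact Complex.continuous_re.comp (Continuous.matrix_trace c2)

lemma sand_superadd {α : ℝ} (hα : α ∈ Set.Ico (1/2:ℝ) 1) {M₁ M₂ N₁ N₂ : Matrix n n ℂ}
    (hM₁ : M₁.PosSemidef) (hM₂ : M₂.PosSemidef) (hN₁ : N₁.PosSemidef) (hN₂ : N₂.PosSemidef)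
    {r : ℝ} (hr : r = (1 - α)/(2*α)) :
    (mpow (mpow N₁ r * M₁ * mpow N₁ r) α).trace.re +
      (mpow (mpow N₂ r * M₂ * mpow N₂ r) α).trace.re ≤
    (mpow (mpow (N₁ + N₂) r * (M₁ + M₂) * mpow (N₁ + N₂) r) α).trace.re := by
  have h0 : 0 < α := by linarith [hα.1]
  have h1α : 0 < 1 - α := by linarith [hα.2]
  have hr0 : 0 ≤ r := by rw [hr]; positivity
  have i1 : (1 : Matrix n n ℂ).IsHermitian := Matrix.isHermitian_one
  have i2 : (1 + 1 : Matrix n n ℂ).IsHermitian := i1.add i1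
  have c1 := sand_cont h0.le hr0 hM₁.1 hN₁.1 i1 i1
  have c2 := sand_cont h0.le hr0 hM₂.1 hN₂.1 i1 i1
  have c3 := sand_cont h0.le hr0 (hM₁.1.add hM₂.1) (hN₁.1.add hN₂.1) i2 i2
  have t1 := (c1.tendsto 0).mono_left (nhdsWithin_le_nhds (s := Set.Ioi 0))
  have t2 := (c2.tendsto 0).mono_left (nhdsWithin_le_nhds (s := Set.Ioi 0))
  have t3 := (c3.tendsto 0).mono_left (nhdsWithin_le_nhds (s := Set.Ioi 0))
  simp only [zero_smul, add_zero] at t1 t2 t3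
  refine le_of_tendsto_of_tendsto (t1.add t2) t3 ?_
  filter_upwards [self_mem_nhdsWithin] with d hd
  have h := sand_superadd_pd hα (pd_add_smul_one hM₁ hd) (pd_add_smul_one hM₂ hd)
    (pd_add_smul_one hN₁ hd) (pd_add_smul_one hN₂ hd) hr
  have e : ∀ A B : Matrix n n ℂ, A + d • (1 : Matrix n n ℂ) + (B + d • (1 : Matrix n n ℂ)) =
      A + B + d • (1 + 1 : Matrix n n ℂ) := by
    intro A B
    rw [smul_add, add_add_add_comm]
  rw [e, e] at h
  exact h

end mainineq

lemma sandTr_eq {a b : Type*} [Fintype a] [DecidableEq a] [Fintype b] [DecidableEq b]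
    (α : ℝ) (ρ : Matrix (a × b) (a × b) ℂ) {η : Matrix b b ℂ} (hη : η.IsHermitian) :
    sandTr α ρ η = (mpow (mpow ((1 : Matrix a a ℂ) ⊗ₖ η) ((1 - α)/(2*α)) * ρ *
      mpow ((1 : Matrix a a ℂ) ⊗ₖ η) ((1 - α)/(2*α))) α).trace.re := by
  rw [sandTr, mpow_kron hη]

lemma sandTr_superadd {a b : Type*} [Fintype a] [DecidableEq a] [Fintype b] [DecidableEq b]
    {α : ℝ} (hα : α ∈ Set.Ico (1/2:ℝ) 1) {ρ₁ ρ₂ : Matrix (a × b) (a × b) ℂ} {η₁ η₂ : Matrix b b ℂ}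
    (h₁ : ρ₁.PosSemidef) (h₂ : ρ₂.PosSemidef) (k₁ : η₁.PosSemidef) (k₂ : η₂.PosSemidef) :
    sandTr α ρ₁ η₁ + sandTr α ρ₂ η₂ ≤ sandTr α (ρ₁ + ρ₂) (η₁ + η₂) := by
  rw [sandTr_eq _ _ k₁.1, sandTr_eq _ _ k₂.1, sandTr_eq _ _ (k₁.add k₂).1, kronecker_add]
  exact sand_superadd hα h₁ h₂ (Matrix.PosSemidef.one.kronecker k₁)
    (Matrix.PosSemidef.one.kronecker k₂) rfl

lemma sandTr_smul {a b : Type*} [Fintype a] [DecidableEq a] [Fintype b] [DecidableEq b]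
    {α : ℝ} (hα : α ∈ Set.Ico (1/2:ℝ) 1) {ρ : Matrix (a × b) (a × b) ℂ} {η : Matrix b b ℂ}
    (h : ρ.PosSemidef) (k : η.PosSemidef) {c d : ℝ} (hc : 0 ≤ c) (hd : 0 < d) :
    sandTr α (c • ρ) (d • η) = c ^ α * d ^ (1 - α) * sandTr α ρ η := by
  have h0 : 0 < α := by linarith [hα.1]
  set r := (1 - α)/(2*α) with hr
  rw [sandTr, sandTr, ← hr, mpow_smul k hd.le, kronecker_smul]
  have : (d ^ r • ((1 : Matrix a a ℂ) ⊗ₖ mpow η r)) * (c • ρ) *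
      (d ^ r • ((1 : Matrix a a ℂ) ⊗ₖ mpow η r)) = (d ^ r * c * d ^ r) •
      (((1 : Matrix a a ℂ) ⊗ₖ mpow η r) * ρ * ((1 : Matrix a a ℂ) ⊗ₖ mpow η r)) := by
    simp only [smul_mul_assoc, mul_smul_comm, smul_smul]
    congr 1; ring
  have hp : (((1 : Matrix a a ℂ) ⊗ₖ mpow η r) * ρ * ((1 : Matrix a a ℂ) ⊗ₖ mpow η r)).PosSemidef := by
    rw [mpow_kron k.1]; exact conj_psd h r
  have hdr : 0 ≤ d ^ r := Real.rpow_nonneg hd.le _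
  rw [this, mpow_smul hp (by positivity), trace_smul, Complex.real_smul, Complex.re_ofReal_mul]
  congr 1
  rw [Real.mul_rpow (by positivity) hdr, Real.mul_rpow hdr hc, ← Real.rpow_mul hd.le,
    mul_right_comm, ← Real.rpow_add hd, mul_comm]
  congr 2
  rw [hr]; field_simp; ring

/-- Key lower bound in the proof of Theorem 1 of Marwah–Dupuis: with
`θ = (1/(1+ε))μ + (ε/(1+ε))ν`,
`tr((θ^{-α'/2}(σ+εP)θ^{-α'/2})^α) ≥ (1+ε)^{α-1}[tr((μ^{-α'/2}σμ^{-α'/2})^α) + ε tr((ν^{-α'/2}Pν^{-α'/2})^α)]`. -/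
theorem sandTr_lower_bound {dA dB : ℕ} (α : ℝ) (hα : α ∈ Set.Ico (1/2 : ℝ) 1)
    (σ P : Matrix (Fin dA × Fin dB) (Fin dA × Fin dB) ℂ)
    (hσ : IsDensity σ) (hP : IsDensity P)
    (ε : ℝ) (hε : 0 < ε)
    (μ ν : Matrix (Fin dB) (Fin dB) ℂ) (hμ : IsDensity μ) (hν : IsDensity ν) :
    (1+ε) ^ (α-1) * (sandTr α σ μ + ε * sandTr α P ν) ≤
      sandTr α (σ + ε • P) ((1/(1+ε)) • μ + (ε/(1+ε)) • ν) := by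
  obtain ⟨hσ, -⟩ := hσ
  obtain ⟨hP, -⟩ := hP
  obtain ⟨hμ, -⟩ := hμ
  obtain ⟨hν, -⟩ := hν
  have hps : ∀ {m : Type} [Fintype m] [DecidableEq m] {A : Matrix m m ℂ}, A.PosSemidef →
    (ε • A).PosSemidef := fun hA => hA.smul hε.le
  have h1ε : 0 < 1 + ε := by linarith
  have e1 : ((1/(1+ε)) • μ + (ε/(1+ε)) • ν) = (1+ε)⁻¹ • (μ + ε • ν) := by
    rw [smul_add, smul_smul, one_div, div_eq_inv_mul]
  have e2 := sandTr_smul hα (hσ.add (hps hP)) (hμ.add (hps hν)) zero_le_one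
    (inv_pos.mpr h1ε)
  rw [one_smul, Real.one_rpow, one_mul, Real.inv_rpow h1ε.le, ← Real.rpow_neg h1ε.le, neg_sub] at e2
  have e3 := sandTr_smul hα hP hν hε.le hε
  rw [← Real.rpow_add hε, add_sub_cancel, Real.rpow_one] at e3
  rw [e1, e2, ← e3]
  exact mul_le_mul_of_nonneg_left (sandTr_superadd hα hσ (hps hP) hμ (hps hν))
    (Real.rpow_nonneg h1ε.le _)
end
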